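/- arXiv:1907.02189 — 5 statements merged into one kernel-verified Lean document; each statement's English description precedes it below -/
import Mathlib

section
/- Let H be a real inner product space, N ≥ 1, and let p_1,…,p_N ≥ 0 with Σ_{k=1}^N p_k = 1. Let F_1,…,F_N : H → ℝ be differentiable, L-smooth and μ-strongly convex (with 0 < μ and 0 < L), and assume each F_k attains a minimum value F_k^*. Let F = Σ_k p_k F_k attain its minimum value F^* at a point w^*, and set Γ = F^* − Σ_k p_k F_k^*. Then for any points w_1,…,w_N ∈ H, writing w̄ = Σ_k p_k w_k and ḡ = Σ_k p_k ∇F_k(w_k), and any step size η with 0 < η ≤ 1/(4L), one has ‖w̄ − η ḡ − w^*‖² ≤ (1 − μη) ‖w̄ − w^*‖² + 2 Σ_k p_k ‖w̄ − w_k‖² + 6 L η² Γ. -/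
open Finset
open scoped RealInnerProductSpace

/-!
Write `x` for the averaged iterate `w̄`, `z` for the point to which distances are measured, and `bₖ`
for a lower bound of `Fₖ`. By convexity of `‖·‖²` it suffices to follow each client separately, i.e.
to bound `‖x - η ∇Fₖ(wₖ) - z‖²`. Expanding the square, strong convexity at `wₖ` gives the
contraction `-μη ‖wₖ - z‖²` together with `-2η (Fₖ wₖ - Fₖ z)`, and smoothness bounds the gradient
term by `4Lη² (Fₖ wₖ - bₖ)`. As `2Lη ≤ 1`, the total coefficient of `Fₖ wₖ` is nonpositive, so
`Fₖ wₖ` may be replaced by a lower bound in terms of `Fₖ x`. This leaves a nonpositive multiple of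
`Fₖ x - Fₖ z`, whose sign is known only after averaging over `k`.
-/

/-- One-sided quadratic bound expressing `L`-smoothness of `f` at the single point `u`, with the
vector `g` in the role of `∇f(u)`. -/
def HasQuadraticUpperBoundAt {H : Type*} [NormedAddCommGroup H] [InnerProductSpace ℝ H]
    (f : H → ℝ) (g : H) (L : ℝ) (u : H) : Prop :=
  ∀ v, f v ≤ f u + ⟪g, v - u⟫ + L / 2 * ‖v - u‖ ^ 2

/-- One-sided quadratic bound expressing `μ`-strong convexity of `f` at the single point `u`, with
the vector `g` in the role of `∇f(u)`; for `μ = 0` it says that `g` is a subgradient of `f` at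
`u`. -/
def HasQuadraticLowerBoundAt {H : Type*} [NormedAddCommGroup H] [InnerProductSpace ℝ H]
    (f : H → ℝ) (g : H) (μ : ℝ) (u : H) : Prop :=
  ∀ v, f u + ⟪g, v - u⟫ + μ / 2 * ‖v - u‖ ^ 2 ≤ f v

section WeightedSums

variable {ι E : Type*} {s : Finset ι} {p : ι → ℝ}

theorem norm_sum_smul_pow_le_sum_mul_norm_pow [SeminormedAddCommGroup E] [NormedSpace ℝ E]
    (hp : ∀ k ∈ s, 0 ≤ p k) (hpsum : ∑ k ∈ s, p k = 1) (v : ι → E) (n : ℕ) :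
    ‖∑ k ∈ s, p k • v k‖ ^ n ≤ ∑ k ∈ s, p k * ‖v k‖ ^ n :=
  (convexOn_univ_norm.pow (fun _ _ => norm_nonneg _) n).map_sum_le hp hpsum
    fun _ _ => Set.mem_univ _

theorem sum_smul_sub_const [AddCommGroup E] [Module ℝ E] (hpsum : ∑ k ∈ s, p k = 1)
    (v : ι → E) (z : E) : ∑ k ∈ s, p k • (v k - z) = ∑ k ∈ s, p k • v k - z := by
  simp only [smul_sub, sum_sub_distrib, ← sum_smul, hpsum, one_smul]

theorem sum_smul_const_sub_smul_sub_const [AddCommGroup E] [Module ℝ E]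
    (hpsum : ∑ k ∈ s, p k = 1) (v : ι → E) (x z : E) (η : ℝ) :
    ∑ k ∈ s, p k • (x - η • v k - z) = x - η • ∑ k ∈ s, p k • v k - z := by
  simp only [smul_sub, sum_sub_distrib, ← sum_smul, hpsum, one_smul, smul_comm _ η, ← smul_sum]

end WeightedSums

section QuadraticBounds

variable {H : Type*} [NormedAddCommGroup H] [InnerProductSpace ℝ H]
  {f : H → ℝ} {g gw gx u w x z : H} {L μ η b : ℝ}

theorem norm_smul_sq {E : Type*} [SeminormedAddCommGroup E] [NormedSpace ℝ E] (r : ℝ) (v : E) :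
    ‖r • v‖ ^ 2 = r ^ 2 * ‖v‖ ^ 2 := by
  rw [norm_smul, mul_pow, Real.norm_eq_abs, sq_abs]

theorem neg_two_mul_mul_inner_le (η : ℝ) (u v : H) :
    -(2 * η * ⟪u, v⟫) ≤ ‖u‖ ^ 2 + η ^ 2 * ‖v‖ ^ 2 := by
  have hsq : ‖u + η • v‖ ^ 2 = ‖u‖ ^ 2 + 2 * η * ⟪u, v⟫ + η ^ 2 * ‖v‖ ^ 2 := by
    rw [norm_add_sq_real, real_inner_smul_right, norm_smul_sq]
    ring
  linarith [sq_nonneg ‖u + η • v‖]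

theorem HasQuadraticUpperBoundAt.norm_sq_le (hL : 0 < L) (hf : HasQuadraticUpperBoundAt f g L u)
    (hb : ∀ v, b ≤ f v) : ‖g‖ ^ 2 ≤ 2 * L * (f u - b) := by
  -- `u - L⁻¹ • g` minimizes the quadratic upper bound.
  have hmin : f u + ⟪g, u - L⁻¹ • g - u⟫ + L / 2 * ‖u - L⁻¹ • g - u‖ ^ 2
      = f u - ‖g‖ ^ 2 / (2 * L) := by
    rw [sub_sub_cancel_left, inner_neg_right, real_inner_smul_right, real_inner_self_eq_norm_sq,
      norm_neg, norm_smul_sq]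
    field_simp
    ring
  have hdecrease : b ≤ f u - ‖g‖ ^ 2 / (2 * L) := hmin ▸ (hb _).trans (hf _)
  rw [← div_le_iff₀' (by positivity)]
  linarith

theorem HasQuadraticLowerBoundAt.two_mul_mul_sub_le (hμ : 0 ≤ μ) (hη : 0 ≤ η)
    (hf : HasQuadraticLowerBoundAt f g μ u) (v : H) :
    2 * η * (f u - f v) ≤ ‖v - u‖ ^ 2 + η ^ 2 * ‖g‖ ^ 2 := by
  have hsub : f u - f v ≤ -⟪v - u, g⟫ := by
    have hquad : 0 ≤ μ / 2 * ‖v - u‖ ^ 2 := by positivity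
    linarith [hf v, real_inner_comm g (v - u)]
  calc 2 * η * (f u - f v)
      ≤ 2 * η * -⟪v - u, g⟫ := by gcongr
    _ = -(2 * η * ⟪v - u, g⟫) := by ring
    _ ≤ ‖v - u‖ ^ 2 + η ^ 2 * ‖g‖ ^ 2 := neg_two_mul_mul_inner_le η (v - u) g

theorem HasQuadraticLowerBoundAt.norm_sub_smul_sub_sq_le (hη : 0 ≤ η)
    (hf : HasQuadraticLowerBoundAt f g μ w) (x z : H) :
    ‖x - η • g - z‖ ^ 2 ≤ ‖x - z‖ ^ 2 + ‖x - w‖ ^ 2 - μ * η * ‖w - z‖ ^ 2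
      + 2 * η ^ 2 * ‖g‖ ^ 2 - 2 * η * (f w - f z) := by
  have hexpand : ‖x - η • g - z‖ ^ 2 = ‖x - z‖ ^ 2 - 2 * η * ⟪x - w, g⟫
      + 2 * η * ⟪g, z - w⟫ + η ^ 2 * ‖g‖ ^ 2 := by
    have hinner : ⟪x - z, g⟫ = ⟪x - w, g⟫ - ⟪g, z - w⟫ := by
      rw [real_inner_comm (z - w), ← inner_sub_left, sub_sub_sub_cancel_right]
    rw [sub_right_comm, norm_sub_sq_real, real_inner_smul_right, norm_smul_sq, hinner]
    ring
  have hyoung := neg_two_mul_mul_inner_le η (x - w) g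
  have hconv : 2 * η * (f w + ⟪g, z - w⟫ + μ / 2 * ‖w - z‖ ^ 2) ≤ 2 * η * f z := by
    rw [norm_sub_rev w z]
    exact mul_le_mul_of_nonneg_left (hf z) (by positivity)
  linarith

theorem norm_sub_smul_sub_sq_le_of_quadraticBounds (hL : 0 < L) (hμ : 0 ≤ μ) (hη : 0 ≤ η)
    (hLη : 2 * (L * η) ≤ 1)
    (hw_upper : HasQuadraticUpperBoundAt f gw L w) (hw_lower : HasQuadraticLowerBoundAt f gw μ w)
    (hx_upper : HasQuadraticUpperBoundAt f gx L x) (hx_lower : HasQuadraticLowerBoundAt f gx μ x)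
    (hb : ∀ v, b ≤ f v) (z : H) :
    ‖x - η • gw - z‖ ^ 2 ≤ ‖x - z‖ ^ 2 - μ * η * ‖w - z‖ ^ 2 + 2 * ‖x - w‖ ^ 2
      + 6 * L * η ^ 2 * (f z - b)
      - 2 * η * (1 - L * η) * (1 - 2 * (L * η)) * (f x - f z) := by
  have hgw : η ^ 2 * ‖gw‖ ^ 2 ≤ η ^ 2 * (2 * L * (f w - b)) := by
    gcongr
    exact hw_upper.norm_sq_le hL hb
  have hgx : η ^ 2 * ‖gx‖ ^ 2 ≤ η ^ 2 * (2 * L * (f x - b)) := by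
    gcongr
    exact hx_upper.norm_sq_le hL hb
  have hlocal : 2 * η * (f x - f w) ≤ ‖x - w‖ ^ 2 + η ^ 2 * (2 * L * (f x - b)) := by
    rw [norm_sub_rev x w]
    exact (hx_lower.two_mul_mul_sub_le hμ hη w).trans (by gcongr)
  have hscaled := mul_le_mul_of_nonneg_left hlocal (sub_nonneg.2 hLη)
  have hslack : 0 ≤ L * η * (‖x - w‖ ^ 2 + 2 * (L * η ^ 2) * (f z - b)) := by
    have := sub_nonneg.2 (hb z)
    positivity
  linarith [hw_lower.norm_sub_smul_sub_sq_le hη x z]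

end QuadraticBounds

theorem fedavg_one_step_descent_general
    {ι H : Type*} [NormedAddCommGroup H] [InnerProductSpace ℝ H] {s : Finset ι}
    {p : ι → ℝ} (hp : ∀ k ∈ s, 0 ≤ p k) (hpsum : ∑ k ∈ s, p k = 1)
    {F : ι → H → ℝ} {gf : ι → H → H} {L μ : ℝ} (hμ : 0 ≤ μ) (hL : 0 < L)
    (hdiff : ∀ k ∈ s, ∀ x, HasFDerivAt (F k) ((innerSL ℝ) (gf k x)) x)
    (hsmooth : ∀ k ∈ s, ∀ u, HasQuadraticUpperBoundAt (F k) (gf k u) L u)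
    (hconv : ∀ k ∈ s, ∀ u, HasQuadraticLowerBoundAt (F k) (gf k u) μ u)
    {b : ι → ℝ} (hb : ∀ k ∈ s, ∀ v, b k ≤ F k v) (w : ι → H) {z : H}
    (hz : ∑ k ∈ s, p k * F k z ≤ ∑ k ∈ s, p k * F k (∑ j ∈ s, p j • w j))
    {η : ℝ} (hη : 0 ≤ η) (hη' : η ≤ 1 / (2 * L)) :
    ‖(∑ k ∈ s, p k • w k) - η • (∑ k ∈ s, p k • gf k (w k)) - z‖ ^ 2 ≤
      (1 - μ * η) * ‖(∑ k ∈ s, p k • w k) - z‖ ^ 2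
        + 2 * ∑ k ∈ s, p k * ‖(∑ j ∈ s, p j • w j) - w k‖ ^ 2
        + 6 * L * η ^ 2 * (∑ k ∈ s, p k * F k z - ∑ k ∈ s, p k * b k) := by
  set x := ∑ k ∈ s, p k • w k
  have hLη : 2 * (L * η) ≤ 1 := by
    rw [le_div_iff₀ (by positivity)] at hη'
    linarith
  set c := 2 * η * (1 - L * η) * (1 - 2 * (L * η))
  have hgap : 0 ≤ c * (∑ k ∈ s, p k * F k x - ∑ k ∈ s, p k * F k z) := by
    exact mul_nonneg (mul_nonneg (mul_nonneg (by positivity) (by linarith)) (by linarith))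
      (sub_nonneg.2 hz)
  have hdist : μ * η * ‖x - z‖ ^ 2 ≤ μ * η * ∑ k ∈ s, p k * ‖w k - z‖ ^ 2 := by
    gcongr
    rw [← sum_smul_sub_const hpsum]
    exact norm_sum_smul_pow_le_sum_mul_norm_pow hp hpsum _ 2
  calc ‖x - η • (∑ k ∈ s, p k • gf k (w k)) - z‖ ^ 2
      ≤ ∑ k ∈ s, p k * ‖x - η • gf k (w k) - z‖ ^ 2 := by
        rw [← sum_smul_const_sub_smul_sub_const hpsum]
        exact norm_sum_smul_pow_le_sum_mul_norm_pow hp hpsum _ 2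
    _ ≤ ∑ k ∈ s, p k * (‖x - z‖ ^ 2 - μ * η * ‖w k - z‖ ^ 2 + 2 * ‖x - w k‖ ^ 2
          + 6 * L * η ^ 2 * (F k z - b k) - c * (F k x - F k z)) :=
        sum_le_sum fun k hk => mul_le_mul_of_nonneg_left
          (norm_sub_smul_sub_sq_le_of_quadraticBounds hL hμ hη hLη (hsmooth k hk _)
            (hconv k hk _) (hsmooth k hk _) (hconv k hk _) (hb k hk) z) (hp k hk)
    _ = ‖x - z‖ ^ 2 - μ * η * ∑ k ∈ s, p k * ‖w k - z‖ ^ 2 + 2 * ∑ k ∈ s, p k * ‖x - w k‖ ^ 2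
          + 6 * L * η ^ 2 * (∑ k ∈ s, p k * F k z - ∑ k ∈ s, p k * b k)
          - c * (∑ k ∈ s, p k * F k x - ∑ k ∈ s, p k * F k z) := by
        simp only [mul_add, mul_sub, sum_add_distrib, sum_sub_distrib, ← sum_mul, hpsum, one_mul,
          mul_left_comm (p _), ← mul_sum]
    _ ≤ (1 - μ * η) * ‖x - z‖ ^ 2 + 2 * ∑ k ∈ s, p k * ‖x - w k‖ ^ 2
          + 6 * L * η ^ 2 * (∑ k ∈ s, p k * F k z - ∑ k ∈ s, p k * b k) := by
        linarith

/-- Deterministic core of Lemma 1 of "On the Convergence of FedAvg on Non-IID Data":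
one-step descent bound for the averaged FedAvg iterate. -/
theorem fedavg_one_step_descent
    {H : Type*} [NormedAddCommGroup H] [InnerProductSpace ℝ H]
    (N : ℕ) (hN : 1 ≤ N)
    (p : Fin N → ℝ) (hp : ∀ k, 0 ≤ p k) (hpsum : ∑ k, p k = 1)
    (F : Fin N → H → ℝ) (gf : Fin N → H → H)
    (L μ : ℝ) (hμ : 0 < μ) (hL : 0 < L)
    (hdiff : ∀ k x, HasFDerivAt (F k) ((innerSL ℝ) (gf k x)) x)
    (hsmooth : ∀ k v u, F k v ≤ F k u + ⟪gf k u, v - u⟫ + L / 2 * ‖v - u‖ ^ 2)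
    (hconv : ∀ k v u, F k v ≥ F k u + ⟪gf k u, v - u⟫ + μ / 2 * ‖v - u‖ ^ 2)
    (Fstar : Fin N → ℝ) (hFstar : ∀ k, IsLeast (Set.range (F k)) (Fstar k))
    (Fglobstar : ℝ) (wstar : H)
    (hglob : IsLeast (Set.range fun x => ∑ k, p k * F k x) Fglobstar)
    (hattain : ∑ k, p k * F k wstar = Fglobstar)
    (Γ : ℝ) (hΓ : Γ = Fglobstar - ∑ k, p k * Fstar k)
    (w : Fin N → H) (η : ℝ) (hη : 0 < η) (hη' : η ≤ 1 / (4 * L)) :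
    ‖(∑ k, p k • w k) - η • (∑ k, p k • gf k (w k)) - wstar‖ ^ 2 ≤
      (1 - μ * η) * ‖(∑ k, p k • w k) - wstar‖ ^ 2
        + 2 * ∑ k, p k * ‖(∑ j, p j • w j) - w k‖ ^ 2
        + 6 * L * η ^ 2 * Γ := by
  subst hattain hΓ
  exact fedavg_one_step_descent_general (fun k _ => hp k) hpsum hμ.le hL (fun k _ => hdiff k)
    (fun k _ u v => hsmooth k v u) (fun k _ u v => hconv k v u)
    (fun k _ v => (hFstar k).2 ⟨v, rfl⟩) w (hglob.2 ⟨_, rfl⟩) hη.le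
    (hη'.trans (by gcongr; norm_num))
end

section
/- Let μ > 0, B ≥ 0, β > 1/μ, and γ > 0 with γ ≥ βμ − 1. Define η_t = β/(t + γ) for integers t ≥ 1, and let (Δ_t)_{t ≥ 1} be a sequence of nonnegative reals satisfying Δ_{t+1} ≤ (1 − η_t μ) Δ_t + η_t² B for all t ≥ 1. Then for all t ≥ 1, Δ_t ≤ v/(γ + t), where v = max{ β² B/(βμ − 1), (γ + 1) Δ_1 }. -/
/-!
Writing `a = β μ`, `b = β² B` and `s = γ + t`, the recursion becomes
`Δ (t + 1) ≤ (1 - a / s) Δ t + b / s²`. The profile `v / s` is a supersolution as soon as `0 ≤ v`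
and `b ≤ (a - 1) v`: one step sends it to at most `(s - 1) v / s² ≤ v / (s + 1)`, because
`(s - 1) (s + 1) ≤ s²`. The condition `a ≤ s` makes the step monotone in `Δ t`, so the bound
propagates. The two arguments of the maximum are what the step and the initial value require of `v`.
-/

section ContractionRecursion

variable {K : Type*} [Field K] [LinearOrder K] [IsStrictOrderedRing K] {a b v γ : K} {Δ : ℕ → K}

lemma sub_one_mul_div_sq_le_div_add_one {s : K} (hs : 0 < s) (hv : 0 ≤ v) :
    (s - 1) * v / s ^ 2 ≤ v / (s + 1) := by
  rw [div_le_div_iff₀ (by positivity) (by positivity)]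
  calc (s - 1) * v * (s + 1) = v * (s ^ 2 - 1) := by ring
    _ ≤ v * s ^ 2 := mul_le_mul_of_nonneg_left (sub_le_self _ zero_le_one) hv

lemma one_sub_div_mul_div_add_div_sq_le {s : K} (hs : 0 < s) (hv : 0 ≤ v)
    (hb : b ≤ (a - 1) * v) :
    (1 - a / s) * (v / s) + b / s ^ 2 ≤ v / (s + 1) :=
  calc (1 - a / s) * (v / s) + b / s ^ 2 = ((s - a) * v + b) / s ^ 2 := by field
    _ ≤ (s - 1) * v / s ^ 2 := by gcongr; linarith
    _ ≤ v / (s + 1) := sub_one_mul_div_sq_le_div_add_one hs hv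

lemma le_div_add_natCast_of_contraction_recursion {m : ℕ} (hm : 0 < γ + m) (ha : a ≤ γ + m)
    (hv : 0 ≤ v) (hb : b ≤ (a - 1) * v) (hinit : Δ m ≤ v / (γ + m))
    (hrec : ∀ t : ℕ, m ≤ t → Δ (t + 1) ≤ (1 - a / (γ + t)) * Δ t + b / (γ + t) ^ 2) :
    ∀ t : ℕ, m ≤ t → Δ t ≤ v / (γ + t) := by
  intro t hmt
  induction t, hmt using Nat.le_induction with
  | base => exact hinit
  | succ t hmt ih =>
    have hshift : γ + (m : K) ≤ γ + t := by gcongr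
    have hpos : 0 < γ + (t : K) := hm.trans_le hshift
    have hcontr : 0 ≤ 1 - a / (γ + t) :=
      sub_nonneg.2 ((div_le_one hpos).2 (ha.trans hshift))
    calc Δ (t + 1) ≤ (1 - a / (γ + t)) * Δ t + b / (γ + t) ^ 2 := hrec t hmt
      _ ≤ (1 - a / (γ + t)) * (v / (γ + t)) + b / (γ + t) ^ 2 := by gcongr
      _ ≤ v / (γ + t + 1) := one_sub_div_mul_div_add_div_sq_le hpos hv hb
      _ = v / (γ + (t + 1 : ℕ)) := by rw [Nat.cast_succ, add_assoc]

theorem contraction_recursion_rate_general {m : ℕ} (ha : 1 < a) (haγ : a ≤ γ + m) (hb : 0 ≤ b)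
    (hrec : ∀ t : ℕ, m ≤ t → Δ (t + 1) ≤ (1 - a / (γ + t)) * Δ t + b / (γ + t) ^ 2) :
    ∀ t : ℕ, m ≤ t → Δ t ≤ max (b / (a - 1)) ((γ + m) * Δ m) / (γ + t) := by
  have ha' : 0 < a - 1 := sub_pos.2 ha
  have hm : 0 < γ + (m : K) := zero_lt_one.trans (ha.trans_le haγ)
  have hv : 0 ≤ max (b / (a - 1)) ((γ + m) * Δ m) := le_max_of_le_left (by positivity)
  exact le_div_add_natCast_of_contraction_recursion hm haγ hv
    ((div_le_iff₀' ha').1 (le_max_left _ _)) ((le_div_iff₀' hm).2 (le_max_right _ _)) hrec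

end ContractionRecursion

/-- The sequence-induction step used in the proofs of Theorems 1–3 of the FedAvg paper:
a one-step contraction recursion with diminishing step sizes `η_t = β/(t+γ)` yields an
`O(1/t)` rate with the explicit constant `v`. -/
theorem contraction_recursion_rate
    (μ B β γ : ℝ) (hμ : 0 < μ) (hB : 0 ≤ B)
    (hβ : 1 / μ < β) (hγ : 0 < γ) (hγ2 : β * μ - 1 ≤ γ)
    (Δ : ℕ → ℝ) (hΔ : ∀ t : ℕ, 1 ≤ t → 0 ≤ Δ t)
    (hrec : ∀ t : ℕ, 1 ≤ t →
      Δ (t + 1) ≤ (1 - (β / ((t : ℝ) + γ)) * μ) * Δ t + (β / ((t : ℝ) + γ)) ^ 2 * B) :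
    ∀ t : ℕ, 1 ≤ t →
      Δ t ≤ max (β ^ 2 * B / (β * μ - 1)) ((γ + 1) * Δ 1) / (γ + (t : ℝ)) := by
  simpa only [Nat.cast_one] using contraction_recursion_rate_general (m := 1)
    ((div_lt_iff₀ hμ).1 hβ) (by simpa using hγ2) (by positivity : 0 ≤ β ^ 2 * B)
    (by simpa only [div_mul_eq_mul_div, div_pow, add_comm γ] using hrec)
end

section
/- Let H be a real inner product space, N ≥ 2 and 1 ≤ K ≤ N integers, v_1,…,v_N ∈ H, and v̄ = (1/N) Σ_{i=1}^N v_i. Then (1/C(N,K)) Σ_{S ⊆ {1,…,N}, |S| = K} ‖(1/K) Σ_{i ∈ S} v_i − v̄‖² = ((N−K)/(K·N·(N−1))) Σ_{i=1}^N ‖v_i − v̄‖², where C(N,K) is the binomial coefficient. -/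
open Finset

/-!
Centre the family, `w i = v i - v̄`, so that `∑ i, w i = 0` and the claim becomes a formula for
`∑ S, ‖∑ i ∈ S, w i‖ ^ 2`. Expanding the square and exchanging sums weights `⟪w i, w j⟫` by the
number of `K`-subsets containing both `i` and `j`. This number depends only on whether `i = j`, and
its constant part contributes a multiple of `⟪∑ i, w i, ∑ j, w j⟫ = 0`, so only the diagonal
survives.
-/

section Counting

variable {ι : Type*} [DecidableEq ι] {s t : Finset ι}

/-- For `t = {i}` and `t = {i, j}` this gives the inclusion probabilities `k / n` and
`k (k - 1) / (n (n - 1))` of a uniformly random `k`-subset of an `n`-set. -/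
lemma card_filter_powersetCard_subset_mul_descFactorial (k : ℕ) (hts : t ⊆ s) :
    #{S ∈ powersetCard k s | t ⊆ S} * (#s).descFactorial #t =
      (#s).choose k * k.descFactorial #t := by
  obtain hk | hk := lt_or_ge k #t
  · have hempty : {S ∈ powersetCard k s | t ⊆ S} = ∅ := by
      refine filter_eq_empty_iff.mpr fun S hS htS => ?_
      exact hk.not_ge ((card_le_card htS).trans_eq (mem_powersetCard.mp hS).2)
    rw [hempty, card_empty, zero_mul, Nat.descFactorial_of_lt hk, mul_zero]
  · rw [card_filter_powersetCard_subset t s k hts hk, Nat.descFactorial_eq_factorial_mul_choose,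
      Nat.descFactorial_eq_factorial_mul_choose, mul_left_comm ((#s).choose k), Nat.choose_mul hk]
    ring

lemma card_filter_powersetCard_pair_subset_mul {R : Type*} [CommRing R] (k : ℕ) {i j : ι}
    (hi : i ∈ s) (hj : j ∈ s) :
    (#{S ∈ powersetCard k s | {i, j} ⊆ S} : R) * (#s * (#s - 1)) =
      (#s).choose k * (k * (k - 1)) +
        if i = j then (#s).choose k * (k * (#s - k) : R) else 0 := by
  have hpair : ({i, j} : Finset ι) ⊆ s := by simp [insert_subset_iff, hi, hj]
  have hcount := congrArg (Nat.cast (R := R))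
    (card_filter_powersetCard_subset_mul_descFactorial k hpair)
  obtain rfl | hij := eq_or_ne i j
  · simp only [pair_eq_singleton, card_singleton, Nat.descFactorial_one, Nat.cast_mul] at hcount
    simp only [pair_eq_singleton, if_true]
    linear_combination ((#s : R) - 1) * hcount
  · simpa only [card_pair hij, Nat.cast_mul, Nat.cast_descFactorial_two, if_neg hij, add_zero]
      using hcount

lemma sum_sum_sum_mem_eq_sum_sum_card_nsmul {M : Type*} [AddCommMonoid M] {𝒜 : Finset (Finset ι)}
    (h𝒜 : ∀ S ∈ 𝒜, S ⊆ s) (f : ι → ι → M) :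
    ∑ S ∈ 𝒜, ∑ i ∈ S, ∑ j ∈ S, f i j = ∑ i ∈ s, ∑ j ∈ s, #{S ∈ 𝒜 | {i, j} ⊆ S} • f i j := by
  calc ∑ S ∈ 𝒜, ∑ i ∈ S, ∑ j ∈ S, f i j
      = ∑ i ∈ s, ∑ S ∈ 𝒜 with i ∈ S, ∑ j ∈ S, f i j :=
        sum_comm' fun S i => by grind
    _ = ∑ i ∈ s, ∑ j ∈ s, ∑ S ∈ 𝒜 with {i, j} ⊆ S, f i j :=
        sum_congr rfl fun i _ => sum_comm' fun S j => by grind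
    _ = ∑ i ∈ s, ∑ j ∈ s, #{S ∈ 𝒜 | {i, j} ⊆ S} • f i j := by
        simp only [sum_const]

end Counting

section SecondMoment

variable {ι : Type*} {s : Finset ι}

lemma card_mul_sum_powersetCard_sum_sum_of_row_sum_eq_zero {R : Type*} [CommRing R] (k : ℕ)
    {f : ι → ι → R} (hf : ∀ i ∈ s, ∑ j ∈ s, f i j = 0) :
    (#s : R) * (#s - 1) * ∑ S ∈ powersetCard k s, ∑ i ∈ S, ∑ j ∈ S, f i j =
      (#s).choose k * (k * (#s - k)) * ∑ i ∈ s, f i i := by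
  classical
  rw [sum_sum_sum_mem_eq_sum_sum_card_nsmul (fun S hS => (mem_powersetCard.mp hS).1), mul_sum,
    mul_sum]
  refine sum_congr rfl fun i hi => ?_
  calc (#s : R) * (#s - 1) * ∑ j ∈ s, #{S ∈ powersetCard k s | {i, j} ⊆ S} • f i j
      = ∑ j ∈ s, ((#s).choose k * (k * (k - 1)) * f i j +
          if i = j then (#s).choose k * (k * (#s - k)) * f i j else 0) := by
        rw [mul_sum]
        refine sum_congr rfl fun j hj => ?_
        rw [nsmul_eq_mul, ← mul_assoc, mul_comm (_ * _) (Nat.cast _),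
          card_filter_powersetCard_pair_subset_mul k hi hj, add_mul, ite_mul, zero_mul]
    _ = (#s).choose k * (k * (#s - k)) * f i i := by
        rw [sum_add_distrib, ← mul_sum, hf i hi, mul_zero, zero_add, sum_ite_eq, if_pos hi]

lemma card_mul_sum_powersetCard_norm_sum_sq_of_sum_eq_zero {H : Type*}
    [SeminormedAddCommGroup H] [InnerProductSpace ℝ H] (k : ℕ) {w : ι → H}
    (hw : ∑ i ∈ s, w i = 0) :
    (#s : ℝ) * (#s - 1) * ∑ S ∈ powersetCard k s, ‖∑ i ∈ S, w i‖ ^ 2 =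
      (#s).choose k * (k * (#s - k)) * ∑ i ∈ s, ‖w i‖ ^ 2 := by
  have hrow : ∀ i ∈ s, ∑ j ∈ s, inner ℝ (w i) (w j) = 0 := fun i _ => by
    rw [← inner_sum, hw, inner_zero_right]
  simpa only [← inner_sum, ← sum_inner, real_inner_self_eq_norm_sq] using
    card_mul_sum_powersetCard_sum_sum_of_row_sum_eq_zero k hrow

end SecondMoment

section Average

variable {ι E : Type*} (𝕜 : Type*) [DivisionRing 𝕜] [CharZero 𝕜] [AddCommGroup E] [Module 𝕜 E]

lemma sum_sub_eq_card_smul_average_sub {S : Finset ι} (hS : S.Nonempty) (v : ι → E) (m : E) :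
    ∑ i ∈ S, (v i - m) = (#S : 𝕜) • ((#S : 𝕜)⁻¹ • ∑ i ∈ S, v i - m) := by
  have hcard : (#S : 𝕜) ≠ 0 := Nat.cast_ne_zero.mpr hS.card_ne_zero
  rw [sum_sub_distrib, sum_const, smul_sub, smul_inv_smul₀ hcard, Nat.cast_smul_eq_nsmul]

lemma sum_sub_average_eq_zero (s : Finset ι) (v : ι → E) :
    ∑ i ∈ s, (v i - (#s : 𝕜)⁻¹ • ∑ j ∈ s, v j) = 0 := by
  obtain rfl | hs := s.eq_empty_or_nonempty
  · exact sum_empty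
  · rw [sum_sub_eq_card_smul_average_sub 𝕜 hs, sub_self, smul_zero]

end Average

theorem scheme_II_variance_identity_general {ι H : Type*} [SeminormedAddCommGroup H]
    [InnerProductSpace ℝ H] {s : Finset ι} {k : ℕ} (hs : 2 ≤ #s) (hk : 1 ≤ k) (hks : k ≤ #s)
    (v : ι → H) :
    ((#s).choose k : ℝ)⁻¹ * ∑ S ∈ powersetCard k s,
        ‖(k : ℝ)⁻¹ • (∑ i ∈ S, v i) - (#s : ℝ)⁻¹ • ∑ i ∈ s, v i‖ ^ 2 =
      ((#s : ℝ) - k) / (k * #s * (#s - 1)) * ∑ i ∈ s, ‖v i - (#s : ℝ)⁻¹ • ∑ j ∈ s, v j‖ ^ 2 := by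
  have hmoment := card_mul_sum_powersetCard_norm_sum_sq_of_sum_eq_zero k
    (sum_sub_average_eq_zero ℝ s v)
  set m : H := (#s : ℝ)⁻¹ • ∑ i ∈ s, v i
  have hscale : ∀ S ∈ powersetCard k s,
      ‖∑ i ∈ S, (v i - m)‖ ^ 2 = (k : ℝ) ^ 2 * ‖(k : ℝ)⁻¹ • (∑ i ∈ S, v i) - m‖ ^ 2 := by
    intro S hS
    obtain ⟨-, rfl⟩ := mem_powersetCard.mp hS
    rw [sum_sub_eq_card_smul_average_sub ℝ (card_pos.mp hk), norm_smul, mul_pow, Real.norm_natCast]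
  rw [sum_congr rfl hscale, ← mul_sum] at hmoment
  have hk₀ : (k : ℝ) ≠ 0 := by positivity
  have hs₁ : (#s : ℝ) - 1 ≠ 0 := sub_ne_zero.mpr (by exact_mod_cast (show #s ≠ 1 by lia))
  have hden : (k : ℝ) * #s * (#s - 1) ≠ 0 := by positivity
  have hchoose : ((#s).choose k : ℝ) ≠ 0 := Nat.cast_ne_zero.mpr (Nat.choose_pos hks).ne'
  rw [inv_mul_eq_iff_eq_mul₀ hchoose, div_mul_eq_mul_div, ← mul_div_assoc, eq_div_iff hden]
  refine mul_left_cancel₀ hk₀ ?_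
  linear_combination hmoment

/-- The key identity in part (2) of Lemma 5 of the FedAvg paper: variance of the aggregate
under uniform without-replacement sampling of a size-`K` subset (Scheme II with equal weights). -/
theorem scheme_II_variance_identity
    {H : Type*} [NormedAddCommGroup H] [InnerProductSpace ℝ H]
    (N K : ℕ) (hN : 2 ≤ N) (hK : 1 ≤ K) (hKN : K ≤ N)
    (v : Fin N → H) :
    ((N.choose K : ℝ))⁻¹ *
        ∑ S ∈ Finset.powersetCard K (Finset.univ : Finset (Fin N)),
          ‖((K : ℝ))⁻¹ • (∑ i ∈ S, v i) - ((N : ℝ))⁻¹ • ∑ i, v i‖ ^ 2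
      = (((N : ℝ) - (K : ℝ)) / ((K : ℝ) * (N : ℝ) * ((N : ℝ) - 1))) *
          ∑ i, ‖v i - ((N : ℝ))⁻¹ • ∑ j, v j‖ ^ 2 := by
  simpa only [card_univ, Fintype.card_fin] using
    scheme_II_variance_identity_general (s := univ) (by simpa using hN) hK (by simpa using hKN) v
end

section
/- Let A_1,…,A_N be n×n real symmetric positive semidefinite matrices with xᵀ A_i x ≤ 4 ‖x‖² for all x ∈ ℝ^n and all i, and assume A = Σ_{i=1}^N A_i is positive definite. Let 0 < η < 1/4 and let E ≥ 1 be an integer. Then the matrix M = (1/N) Σ_{i=1}^N (I − η A_i)^E is symmetric positive semidefinite, satisfies xᵀ M x < ‖x‖² for every x ≠ 0, and its operator (spectral) norm satisfies ‖M‖ < 1. -/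
open Matrix

/-!
For `0 ≤ b ≤ 1` in a star-ordered ring the powers of `b` decrease, because
`b * (1 - b) * b + (1 - b) * b * (1 - b) = b - b ^ 2` is a sum of conjugates of positive elements.
With `b = 1 - η • a i` this bounds the `i`-th summand by `1 - η • a i`, so the average is at most
`1 - η • ∑ i, w i • a i`. Strict positivity of the weighted sum keeps the spectrum of the average
inside `[0, 1)`, and the norm of a self-adjoint element is its spectral radius.
-/

section StarOrderedRing

variable {R : Type*} [Ring R] [PartialOrder R] [StarRing R] [StarOrderedRing R] {b : R}

lemma pow_nonneg_of_starOrderedRing (hb : 0 ≤ b) (k : ℕ) : 0 ≤ b ^ k := by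
  induction k using Nat.twoStepInduction with
  | zero => simp only [pow_zero, zero_le_one]
  | one => simpa only [pow_one] using hb
  | more k ih _ =>
    rw [pow_succ, pow_succ']
    exact conjugate_nonneg_of_nonneg ih hb

lemma mul_self_le_self_of_nonneg_of_le_one (hb : 0 ≤ b) (hb1 : b ≤ 1) : b * b ≤ b := by
  have hb1' : 0 ≤ 1 - b := sub_nonneg.2 hb1
  have decomposition : b * (1 - b) * b + (1 - b) * b * (1 - b) = b - b * b := by noncomm_ring
  rw [← sub_nonneg, ← decomposition]
  exact add_nonneg (conjugate_nonneg_of_nonneg hb1' hb) (conjugate_nonneg_of_nonneg hb hb1')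

lemma pow_succ_le_pow_of_nonneg_of_le_one (hb : 0 ≤ b) (hb1 : b ≤ 1) (k : ℕ) :
    b ^ (k + 1) ≤ b ^ k := by
  induction k using Nat.twoStepInduction with
  | zero => simpa only [zero_add, pow_one, pow_zero] using hb1
  | one => simpa only [one_add_one_eq_two, sq, pow_one] using
      mul_self_le_self_of_nonneg_of_le_one hb hb1
  | more k ih _ =>
    calc b ^ (k + 2 + 1) = b * b ^ (k + 1) * b := by rw [pow_succ, ← pow_succ']
      _ ≤ b * b ^ k * b := conjugate_le_conjugate_of_nonneg ih hb
      _ = b ^ (k + 2) := by rw [← pow_succ', ← pow_succ]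

lemma pow_le_self_of_nonneg_of_le_one (hb : 0 ≤ b) (hb1 : b ≤ 1) {k : ℕ} (hk : k ≠ 0) :
    b ^ k ≤ b := by
  have antitone_pow : Antitone fun k : ℕ ↦ b ^ k :=
    antitone_nat_of_succ_le (pow_succ_le_pow_of_nonneg_of_le_one hb hb1)
  simpa only [pow_one] using antitone_pow (Nat.one_le_iff_ne_zero.2 hk)

end StarOrderedRing

lemma isStrictlyPositive_of_le {A : Type*} [TopologicalSpace A] [Ring A] [StarRing A]
    [PartialOrder A] [StarOrderedRing A] [Algebra ℝ A] [NonnegSpectrumClass ℝ A]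
    [ContinuousFunctionalCalculus ℝ A IsSelfAdjoint] {a b : A} (ha : IsStrictlyPositive a)
    (hab : a ≤ b) : IsStrictlyPositive b := by
  nontriviality A
  have hb : 0 ≤ b := ha.nonneg.trans hab
  obtain ⟨r, hr, hra⟩ := (CFC.exists_pos_algebraMap_le_iff ha.isSelfAdjoint).2
    fun _ ↦ ha.spectrum_pos
  have spectrum_pos : ∀ x ∈ spectrum ℝ b, 0 < x :=
    (CFC.exists_pos_algebraMap_le_iff hb.isSelfAdjoint).1 ⟨r, hr, hra.trans hab⟩
  exact (spectrum.isUnit_of_zero_notMem ℝ fun h0 ↦ (spectrum_pos 0 h0).false).isStrictlyPositive hb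

lemma spectrum_lt_one_of_isStrictlyPositive_one_sub {A : Type*} [Ring A] [PartialOrder A]
    [Algebra ℝ A] [NonnegSpectrumClass ℝ A] {a : A} (h : IsStrictlyPositive (1 - a)) {x : ℝ}
    (hx : x ∈ spectrum ℝ a) : x < 1 := by
  have hx' : 1 - x ∈ spectrum ℝ (algebraMap ℝ A 1 - a) := by
    rw [← spectrum.singleton_sub_eq]
    exact Set.sub_mem_sub rfl hx
  rw [map_one] at hx'
  exact sub_pos.1 (h.spectrum_pos hx')

lemma norm_lt_one_of_isStrictlyPositive_one_sub {A : Type*} [NormedRing A] [StarRing A]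
    [PartialOrder A] [StarOrderedRing A] [NormedAlgebra ℝ A] [NonnegSpectrumClass ℝ A]
    [IsometricContinuousFunctionalCalculus ℝ A IsSelfAdjoint] {a : A} (ha : 0 ≤ a)
    (h : IsStrictlyPositive (1 - a)) : ‖a‖ < 1 := by
  rw [← cfc_id ℝ a ha.isSelfAdjoint]
  refine norm_cfc_lt one_pos fun x hx ↦ ?_
  rw [id_eq, Real.norm_of_nonneg (spectrum_nonneg_of_nonneg ha hx)]
  exact spectrum_lt_one_of_isStrictlyPositive_one_sub h hx

/-- The linear part of one round of FedAvg: client `i`, of weight `w i`, takes `E i` gradient steps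
of size `η` on a quadratic loss with Hessian `a i`, and the server averages the results. -/
def fedAvgOperator {ι A : Type*} [Fintype ι] [Ring A] [Algebra ℝ A] (w : ι → ℝ) (η : ℝ)
    (E : ι → ℕ) (a : ι → A) : A :=
  ∑ i, w i • (1 - η • a i) ^ E i

section FedAvg

variable {ι A : Type*} [Fintype ι] {w : ι → ℝ} {η : ℝ} {E : ι → ℕ} {a : ι → A}

section Order

variable [Ring A] [StarRing A] [PartialOrder A] [StarOrderedRing A] [Algebra ℝ A] [StarModule ℝ A]

lemma fedAvgOperator_nonneg (hw : ∀ i, 0 ≤ w i) (ha1 : ∀ i, η • a i ≤ 1) :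
    0 ≤ fedAvgOperator w η E a :=
  Finset.sum_nonneg fun i _ ↦
    smul_nonneg (hw i) (pow_nonneg_of_starOrderedRing (sub_nonneg.2 (ha1 i)) (E i))

lemma fedAvgOperator_le (hw : ∀ i, 0 ≤ w i) (hw1 : ∑ i, w i = 1) (hη : 0 ≤ η)
    (ha : ∀ i, 0 ≤ a i) (ha1 : ∀ i, η • a i ≤ 1) (hE : ∀ i, E i ≠ 0) :
    fedAvgOperator w η E a ≤ 1 - η • ∑ i, w i • a i := by
  have pow_le (i : ι) : (1 - η • a i) ^ E i ≤ 1 - η • a i :=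
    pow_le_self_of_nonneg_of_le_one (sub_nonneg.2 (ha1 i))
      (sub_le_self 1 (smul_nonneg hη (ha i))) (hE i)
  calc fedAvgOperator w η E a
      ≤ ∑ i, w i • (1 - η • a i) :=
        Finset.sum_le_sum fun i _ ↦ smul_le_smul_of_nonneg_left (pow_le i) (hw i)
    _ = 1 - η • ∑ i, w i • a i := by
        simp only [smul_sub, Finset.sum_sub_distrib, ← Finset.sum_smul, hw1, one_smul,
          Finset.smul_sum, smul_comm η]

end Order

theorem fedavg_contraction_general [NormedRing A] [StarRing A] [PartialOrder A]
    [StarOrderedRing A] [NormedAlgebra ℝ A] [StarModule ℝ A] [NonnegSpectrumClass ℝ A]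
    [IsometricContinuousFunctionalCalculus ℝ A IsSelfAdjoint]
    (hw : ∀ i, 0 ≤ w i) (hw1 : ∑ i, w i = 1) (hη : 0 < η) (ha : ∀ i, 0 ≤ a i)
    (ha1 : ∀ i, η • a i ≤ 1) (hsum : IsStrictlyPositive (∑ i, w i • a i)) (hE : ∀ i, E i ≠ 0) :
    0 ≤ fedAvgOperator w η E a ∧ IsStrictlyPositive (1 - fedAvgOperator w η E a) ∧
      ‖fedAvgOperator w η E a‖ < 1 := by
  have nonneg : 0 ≤ fedAvgOperator w η E a := fedAvgOperator_nonneg hw ha1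
  have strict : IsStrictlyPositive (1 - fedAvgOperator w η E a) :=
    isStrictlyPositive_of_le (hsum.smul hη)
      (le_sub_comm.1 (fedAvgOperator_le hw hw1 hη.le ha ha1 hE))
  exact ⟨nonneg, strict, norm_lt_one_of_isStrictlyPositive_one_sub nonneg strict⟩

end FedAvg

section RealMatrix

variable {m : Type*} [Fintype m] [DecidableEq m] {M : Matrix m m ℝ}

lemma dotProduct_mulVec_lt_of_posDef_one_sub (hM : (1 - M).PosDef) {x : m → ℝ} (hx : x ≠ 0) :
    x ⬝ᵥ M *ᵥ x < x ⬝ᵥ x := by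
  simpa only [star_trivial, sub_mulVec, one_mulVec, dotProduct_sub, sub_pos] using
    hM.dotProduct_mulVec_pos hx

lemma posSemidef_one_sub_smul {η L : ℝ} (hM : M.IsHermitian)
    (hML : ∀ x, x ⬝ᵥ M *ᵥ x ≤ L * (x ⬝ᵥ x)) (hη : 0 ≤ η) (hηL : η * L ≤ 1) :
    (1 - η • M).PosSemidef := by
  refine .of_dotProduct_mulVec_nonneg (isHermitian_one.sub (hM.smul (.all η))) fun x ↦ ?_
  simp only [star_trivial, sub_mulVec, one_mulVec, smul_mulVec, dotProduct_sub, dotProduct_smul,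
    smul_eq_mul, sub_nonneg]
  have hx : 0 ≤ x ⬝ᵥ x := by simpa only [star_trivial] using dotProduct_star_self_nonneg x
  calc η * (x ⬝ᵥ M *ᵥ x) ≤ η * (L * (x ⬝ᵥ x)) := mul_le_mul_of_nonneg_left (hML x) hη
    _ = η * L * (x ⬝ᵥ x) := (mul_assoc ..).symm
    _ ≤ x ⬝ᵥ x := mul_le_of_le_one_left hx hηL

end RealMatrix

/-- The contraction claim in the proof of Theorem 4 of the FedAvg paper:
`M = (1/N) Σᵢ (I − ηAᵢ)^E` is symmetric PSD, its quadratic form is strictly below `‖x‖²`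
for `x ≠ 0`, and its Euclidean operator norm is `< 1`. -/
theorem fedavg_contraction (n N : ℕ) (hN : 1 ≤ N)
    (A : Fin N → Matrix (Fin n) (Fin n) ℝ)
    (hA : ∀ i, (A i).PosSemidef)
    (hA4 : ∀ i (x : Fin n → ℝ), x ⬝ᵥ (A i).mulVec x ≤ 4 * (x ⬝ᵥ x))
    (hsum : (∑ i, A i).PosDef)
    (η : ℝ) (hη0 : 0 < η) (hη : η < 1 / 4)
    (E : ℕ) (hE : 1 ≤ E) :
    (((N : ℝ))⁻¹ • ∑ i, (1 - η • A i) ^ E).PosSemidef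
      ∧ (∀ x : Fin n → ℝ, x ≠ 0 →
          x ⬝ᵥ (((N : ℝ))⁻¹ • ∑ i, (1 - η • A i) ^ E).mulVec x < x ⬝ᵥ x)
      ∧ ‖Matrix.toEuclideanCLM (𝕜 := ℝ) (((N : ℝ))⁻¹ • ∑ i, (1 - η • A i) ^ E)‖ < 1 := by
  have hN0 : (0 : ℝ) < N := Nat.cast_pos.2 hN
  have hA1 (i : Fin N) : (1 - η • A i).PosSemidef :=
    posSemidef_one_sub_smul (hA i).isHermitian (hA4 i) hη0.le (by linarith)
  have hmean : (∑ i, (N : ℝ)⁻¹ • A i).PosDef := by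
    simpa only [Finset.smul_sum] using hsum.smul (inv_pos.2 hN0)
  open scoped MatrixOrder Matrix.Norms.L2Operator in
  obtain ⟨nonneg, strict, norm_lt⟩ := fedavg_contraction_general
    (w := fun _ ↦ (N : ℝ)⁻¹) (E := fun _ ↦ E) (fun _ ↦ inv_nonneg.2 hN0.le)
    (by simp [hN0.ne']) hη0 (fun i ↦ (hA i).nonneg) hA1
    (isStrictlyPositive_iff_posDef.2 hmean) (fun _ ↦ Nat.one_le_iff_ne_zero.1 hE)
  rw [Finset.smul_sum]
  exact ⟨nonneg_iff_posSemidef.1 nonneg,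
    fun x ↦ dotProduct_mulVec_lt_of_posDef_one_sub (isStrictlyPositive_iff_posDef.1 strict),
    norm_lt⟩
end

section
/- Let H be a real inner product space, N ≥ 1, and p_1,…,p_N ≥ 0 with Σ_k p_k = 1. Let F_1,…,F_N : H → ℝ be differentiable, convex (i.e., F_k(v) ≥ F_k(w) + ⟨∇F_k(w), v−w⟩ for all v,w), and L-smooth (L > 0), each bounded below with infimum F_k^*. Let F = Σ_k p_k F_k. Then for any points w_1,…,w_N ∈ H with w̄ = Σ_k p_k w_k, and any η > 0, Σ_{k=1}^N p_k F_k(w_k) ≥ F(w̄) − Σ_{k=1}^N p_k [ η L (F_k(w̄) − F_k^*) + (1/(2η)) ‖w_k − w̄‖² ]. -/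
open Finset
open scoped RealInnerProductSpace

/-!
The inequality holds term by term. Convexity at `w̄` bounds `Fₖ(w̄) - Fₖ(wₖ)` by
`-⟪∇Fₖ(w̄), wₖ - w̄⟫`, which Young's inequality with parameter `η` splits into
`(η / 2) ‖∇Fₖ(w̄)‖²` and `‖wₖ - w̄‖² / (2η)`. A gradient step of length `1 / L` from `w̄` decreases
`Fₖ` by at least `‖∇Fₖ(w̄)‖² / (2L)`, and it cannot go below `Fₖ*`, so
`‖∇Fₖ(w̄)‖² ≤ 2L (Fₖ(w̄) - Fₖ*)`.
-/

section

variable {H : Type*} [SeminormedAddCommGroup H] [InnerProductSpace ℝ H]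

theorem real_inner_le_mul_norm_sq_add_mul_norm_sq (x y : H) {η : ℝ} (hη : 0 < η) :
    ⟪x, y⟫ ≤ η / 2 * ‖x‖ ^ 2 + 1 / (2 * η) * ‖y‖ ^ 2 := by
  have young : 2 * ‖x‖ * ‖y‖ ≤ η * ‖x‖ ^ 2 + η⁻¹ * ‖y‖ ^ 2 := two_mul_le_add_mul_sq hη
  calc ⟪x, y⟫ ≤ ‖x‖ * ‖y‖ := real_inner_le_norm x y
    _ ≤ (η * ‖x‖ ^ 2 + η⁻¹ * ‖y‖ ^ 2) / 2 := by linarith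
    _ = η / 2 * ‖x‖ ^ 2 + 1 / (2 * η) * ‖y‖ ^ 2 := by ring

variable {f : H → ℝ} {g u : H} {L m : ℝ}

theorem apply_gradient_step_le (hL : 0 < L)
    (hsmooth : ∀ v, f v ≤ f u + ⟪g, v - u⟫ + L / 2 * ‖v - u‖ ^ 2) :
    f (u - L⁻¹ • g) ≤ f u - ‖g‖ ^ 2 / (2 * L) := by
  have step : u - L⁻¹ • g - u = -(L⁻¹ • g) := by abel
  calc f (u - L⁻¹ • g)
      ≤ f u + ⟪g, -(L⁻¹ • g)⟫ + L / 2 * ‖-(L⁻¹ • g)‖ ^ 2 := step ▸ hsmooth (u - L⁻¹ • g)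
    _ = f u - L⁻¹ * ‖g‖ ^ 2 + L / 2 * (L⁻¹ * ‖g‖) ^ 2 := by
      rw [inner_neg_right, real_inner_smul_right, real_inner_self_eq_norm_sq, norm_neg,
        norm_smul_of_nonneg (inv_nonneg.2 hL.le), ← sub_eq_add_neg]
    _ = f u - ‖g‖ ^ 2 / (2 * L) := by field_simp; ring

theorem norm_gradient_sq_le (hL : 0 < L)
    (hsmooth : ∀ v, f v ≤ f u + ⟪g, v - u⟫ + L / 2 * ‖v - u‖ ^ 2) (hm : ∀ v, m ≤ f v) :
    ‖g‖ ^ 2 ≤ 2 * L * (f u - m) := by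
  have gap : ‖g‖ ^ 2 / (2 * L) ≤ f u - m := by
    linarith [hm (u - L⁻¹ • g), apply_gradient_step_le hL hsmooth]
  exact (div_le_iff₀' (by positivity)).1 gap

theorem sub_le_apply_of_subgradient_of_smooth (hL : 0 < L)
    (hconv : ∀ v, f u + ⟪g, v - u⟫ ≤ f v)
    (hsmooth : ∀ v, f v ≤ f u + ⟪g, v - u⟫ + L / 2 * ‖v - u‖ ^ 2) (hm : ∀ v, m ≤ f v)
    (v : H) {η : ℝ} (hη : 0 < η) :
    f u - (η * L * (f u - m) + 1 / (2 * η) * ‖v - u‖ ^ 2) ≤ f v := by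
  have grad : η / 2 * ‖g‖ ^ 2 ≤ η * L * (f u - m) :=
    calc η / 2 * ‖g‖ ^ 2 ≤ η / 2 * (2 * L * (f u - m)) := by
          gcongr
          exact norm_gradient_sq_le hL hsmooth hm
      _ = η * L * (f u - m) := by ring
  have young : -⟪g, v - u⟫ ≤ η / 2 * ‖g‖ ^ 2 + 1 / (2 * η) * ‖v - u‖ ^ 2 := by
    simpa only [inner_neg_left, norm_neg] using
      real_inner_le_mul_norm_sq_add_mul_norm_sq (-g) (v - u) hη
  linarith [hconv v]

theorem weighted_obj_lower_bound_general {ι : Type*} (s : Finset ι)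
    {p : ι → ℝ} (hp : ∀ k ∈ s, 0 ≤ p k)
    {F : ι → H → ℝ} {g : ι → H} {u : H} {L : ℝ} (hL : 0 < L)
    (hconv : ∀ k ∈ s, ∀ v, F k u + ⟪g k, v - u⟫ ≤ F k v)
    (hsmooth : ∀ k ∈ s, ∀ v, F k v ≤ F k u + ⟪g k, v - u⟫ + L / 2 * ‖v - u‖ ^ 2)
    {m : ι → ℝ} (hm : ∀ k ∈ s, ∀ v, m k ≤ F k v)
    (w : ι → H) {η : ℝ} (hη : 0 < η) :
    (∑ k ∈ s, p k * F k u)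
        - ∑ k ∈ s, p k * (η * L * (F k u - m k) + 1 / (2 * η) * ‖w k - u‖ ^ 2)
      ≤ ∑ k ∈ s, p k * F k (w k) := by
  simp only [← sum_sub_distrib, ← mul_sub]
  exact sum_le_sum fun k hk => mul_le_mul_of_nonneg_left
    (sub_le_apply_of_subgradient_of_smooth hL (hconv k hk) (hsmooth k hk) (hm k hk) (w k) hη)
    (hp k hk)

end

/-- Lower bound on D = Σₖ pₖ (Fₖ(wₖ) − F*) from the proof of Lemma 1 of the FedAvg paper. -/
theorem weighted_obj_lower_bound
    {H : Type*} [NormedAddCommGroup H] [InnerProductSpace ℝ H]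
    (N : ℕ) (hN : 1 ≤ N)
    (p : Fin N → ℝ) (hp : ∀ k, 0 ≤ p k) (hpsum : ∑ k, p k = 1)
    (F : Fin N → H → ℝ) (gf : Fin N → H → H)
    (L : ℝ) (hL : 0 < L)
    (hdiff : ∀ k x, HasFDerivAt (F k) ((innerSL ℝ) (gf k x)) x)
    (hconv : ∀ k v u, F k v ≥ F k u + ⟪gf k u, v - u⟫)
    (hsmooth : ∀ k v u, F k v ≤ F k u + ⟪gf k u, v - u⟫ + L / 2 * ‖v - u‖ ^ 2)
    (Fstar : Fin N → ℝ) (hFstar : ∀ k, IsGLB (Set.range (F k)) (Fstar k))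
    (w : Fin N → H) (η : ℝ) (hη : 0 < η) :
    ∑ k, p k * F k (w k) ≥
      (∑ k, p k * F k (∑ j, p j • w j))
        - ∑ k, p k * (η * L * (F k (∑ j, p j • w j) - Fstar k)
            + 1 / (2 * η) * ‖w k - ∑ j, p j • w j‖ ^ 2) := by
  exact weighted_obj_lower_bound_general univ (fun k _ => hp k) hL (fun k _ v => hconv k v _)
    (fun k _ v => hsmooth k v _) (fun k _ v => (hFstar k).1 ⟨v, rfl⟩) w hη
end
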